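/- Up to isomorphism, there are exactly 3 Harris graphs on 8 vertices. -/

import Mathlib

universe u

/-- A graph is *Hamiltonian* if it contains a cycle passing through every vertex
exactly once. -/
def SimpleGraph.IsHamiltonianGraph {V : Type*} (G : SimpleGraph V) : Prop :=
  ∃ (a : V) (p : G.Walk a a), p.IsCycle ∧ ∀ v : V, v ∈ p.support

/-- A graph is *tough* if for every set `S` of vertices whose removal disconnects the
graph, the number of connected components of `G − S` is at most `|S|`. -/
def SimpleGraph.Tough {V : Type*} (G : SimpleGraph V) : Prop :=
  ∀ S : Finset V, ¬ (G.induce ((S : Set V)ᶜ)).Connected →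
    Nat.card (G.induce ((S : Set V)ᶜ)).ConnectedComponent ≤ S.card

/-- A graph is *Eulerian* if it is connected and every vertex has even degree. -/
def SimpleGraph.IsEulerianGraph {V : Type*} (G : SimpleGraph V) : Prop :=
  G.Connected ∧ ∀ v : V, Even (Nat.card (G.neighborSet v))

/-- A *Harris graph* is a finite simple graph that is tough, Eulerian and
non-Hamiltonian. -/
def SimpleGraph.IsHarris {V : Type*} (G : SimpleGraph V) : Prop :=
  Finite V ∧ G.Tough ∧ G.IsEulerianGraph ∧ ¬ G.IsHamiltonianGraph

/-!
In an Eulerian graph on 8 vertices every degree is 2 or at least `8 / 2`. In an edge-maximal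
non-Hamiltonian supergraph of a Harris graph, the vertices of large degree are therefore pairwise
adjacent, by the Bondy–Chvátal argument. If no vertex had three neighbours of degree 2, then by
toughness the edges touching a vertex of degree 2 would form a linear forest, and the adjacencies
among the other vertices would close it up to a Hamiltonian cycle. So some `c` has three neighbours
`x₁, x₂, x₃` of degree 2.

Toughness then makes the second neighbours `p₁, p₂, p₃` of the `xᵢ` distinct from each other, from
`c` and from the `xᵢ`, and joins the eighth vertex `w` to each `pᵢ`; parity joins `w` to `c`. What
is left to choose is the graph induced on `c, p₁, p₂, p₃`. It has even degrees, and has an edge by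
toughness; up to permuting the indices there are three such graphs.
-/

namespace HarrisGraph

open SimpleGraph

variable {V : Type*} {G H : SimpleGraph V}

/-! ### Toughness and Hamiltonicity -/

theorem isHamiltonianGraph_mono (h : G ≤ H) (hG : G.IsHamiltonianGraph) :
    H.IsHamiltonianGraph := by
  obtain ⟨a, p, hp, hsupp⟩ := hG
  exact ⟨a, p.mapLe h, hp.mapLe h, by simpa using hsupp⟩

theorem apply_eq_of_reachable {ι : Type*} {f : V → ι} (hf : ∀ u v, G.Adj u v → f u = f v)
    {u v : V} (h : G.Reachable u v) : f u = f v := by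
  obtain ⟨p⟩ := h
  induction p with
  | nil => rfl
  | cons hadj _ ih => exact (hf _ _ hadj).trans ih

theorem card_le_of_tough [Finite V] (hG : G.Tough) (S : Finset V)
    {ι : Type*} [Nontrivial ι] (f : V → ι) (hf : ∀ u ∉ S, ∀ v ∉ S, G.Adj u v → f u = f v)
    (hsurj : ∀ i, ∃ v ∉ S, f v = i) : Nat.card ι ≤ S.card := by
  have hconst {u v : ((S : Set V)ᶜ : Set V)}
      (h : (G.induce (S : Set V)ᶜ).Reachable u v) : f u = f v :=
    apply_eq_of_reachable (f := fun w : ((S : Set V)ᶜ : Set V) ↦ f w)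
      (fun u v h ↦ hf u u.2 v v.2 h) h
  have hdisc : ¬(G.induce (S : Set V)ᶜ).Connected := fun h ↦ by
    obtain ⟨i, j, hij⟩ := exists_pair_ne ι
    obtain ⟨u, hu, rfl⟩ := hsurj i
    obtain ⟨v, hv, rfl⟩ := hsurj j
    exact hij (hconst (h.preconnected ⟨u, hu⟩ ⟨v, hv⟩))
  let g : (G.induce (S : Set V)ᶜ).ConnectedComponent → ι :=
    ConnectedComponent.lift (fun v ↦ f v) fun _ _ p _ ↦ hconst p.reachable
  have hg : Function.Surjective g := fun i ↦ by
    obtain ⟨v, hv, rfl⟩ := hsurj i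
    exact ⟨(G.induce _).connectedComponentMk ⟨v, hv⟩, rfl⟩
  exact (Nat.card_le_card_of_surjective g hg).trans (hG S hdisc)

theorem tough_of_iso {W : Type*} {H : SimpleGraph W} (φ : G ≃g H) (hG : G.Tough) : H.Tough := by
  intro S
  have hS : Set.BijOn φ ((S.map φ.symm.toEquiv.toEmbedding : Finset V) : Set V)ᶜ (S : Set W)ᶜ := by
    refine φ.toEquiv.bijOn fun v ↦ ?_
    simpa using ⟨fun hv x hx h ↦ hv (by simpa [← h] using hx), fun hv hφ ↦ hv _ hφ (by simp)⟩
  rw [← (φ.induce hS).connected_iff, ← Nat.card_congr (φ.induce hS).connectedComponentEquiv,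
    ← Finset.card_map]
  exact hG _

/-! ### The Bondy–Chvátal closure -/

theorem mem_edgeSet_of_notMem_edges {u v a b : V} {p : (G ⊔ edge u v).Walk a b}
    (h : s(u, v) ∉ p.edges) : ∀ e ∈ p.edges, e ∈ G.edgeSet := fun e he ↦ by
  have hmem := p.edges_subset_edgeSet he
  rw [edgeSet_sup] at hmem
  exact hmem.resolve_right fun he' ↦ h (edgeSet_edge_subset he' ▸ he)

theorem exists_path_of_isHamiltonianGraph_sup_edge {u v : V} (hG : ¬G.IsHamiltonianGraph)
    (h : (G ⊔ edge u v).IsHamiltonianGraph) :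
    ∃ q : G.Walk v u, q.IsPath ∧ ∀ w, w ∈ q.support := by
  classical
  obtain ⟨a, p, hp, hsupp⟩ := h
  have huv : s(u, v) ∈ p.edges := by
    by_contra hnot
    have hle := mem_edgeSet_of_notMem_edges hnot
    exact hG ⟨a, p.transfer G hle, hp.transfer hle, by simpa using hsupp⟩
  obtain ⟨r, hr, hsnd, hverts⟩ := (hp.rotate (hsupp u)).exists_isCycle_snd_verts_eq (w := v) (by
    rwa [← Subgraph.mem_edgeSet, Walk.mem_edges_toSubgraph, (p.rotate_edges u _).mem_iff])
  cases r with
  | nil => simp at hr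
  | cons hadj q =>
    rw [Walk.snd_cons] at hsnd
    subst hsnd
    obtain ⟨hq, hnot⟩ := (Walk.cons_isCycle_iff q hadj).mp hr
    have hle := mem_edgeSet_of_notMem_edges hnot
    refine ⟨q.transfer G hle, hq.transfer hle, fun w ↦ ?_⟩
    have hw : w ∈ (Walk.cons hadj q).support := by
      rw [← Walk.mem_verts_toSubgraph, hverts]
      simp [hsupp w]
    rw [Walk.support_cons, List.mem_cons] at hw
    rw [Walk.support_transfer]
    exact hw.elim (fun h ↦ h ▸ q.end_mem_support) id

theorem exists_crossing [Finite V] {u v : V} {q : G.Walk v u} (hq : q.IsPath)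
    (hsupp : ∀ w, w ∈ q.support)
    (hdeg : Nat.card V ≤ (G.neighborSet u).ncard + (G.neighborSet v).ncard) :
    ∃ i < q.length, G.Adj u (q.getVert i) ∧ G.Adj v (q.getVert (i + 1)) := by
  classical
  by_contra! hno
  let I := (Finset.range q.length).filter fun i ↦ G.Adj u (q.getVert i)
  let J := (Finset.range q.length).filter fun i ↦ G.Adj v (q.getVert (i + 1))
  have hI : G.neighborSet u ⊆ I.image q.getVert := fun w hw ↦ by
    obtain ⟨i, rfl, hi⟩ := Walk.mem_support_iff_exists_getVert.mp (hsupp w)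
    have hlt : i < q.length := hi.lt_of_ne (by rintro rfl; simp at hw)
    have hiI : i ∈ I := Finset.mem_filter.mpr ⟨Finset.mem_range.mpr hlt, hw⟩
    simpa using ⟨i, hiI, rfl⟩
  have hJ : G.neighborSet v ⊆ J.image fun i ↦ q.getVert (i + 1) := fun w hw ↦ by
    obtain ⟨i, rfl, hi⟩ := Walk.mem_support_iff_exists_getVert.mp (hsupp w)
    cases i with
    | zero => simp at hw
    | succ i =>
      have hiJ : i ∈ J := Finset.mem_filter.mpr ⟨Finset.mem_range.mpr hi, hw⟩
      simpa using ⟨i, hiJ, rfl⟩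
  have hIJ : Disjoint I J := Finset.disjoint_left.mpr fun i hi hj ↦ by
    simp only [Finset.mem_filter, Finset.mem_range, I, J] at hi hj
    exact hno i hi.1 hi.2 hj.2
  have hcard : (I ∪ J).card ≤ q.length := by
    simpa using Finset.card_le_card (Finset.union_subset (Finset.filter_subset _ _)
      (Finset.filter_subset (fun i ↦ G.Adj v (q.getVert (i + 1))) (Finset.range q.length)))
  have := Set.ncard_le_ncard hI
  have := Set.ncard_le_ncard hJ
  have := Fintype.ofFinite V
  have := hq.length_lt
  have := Finset.card_image_le (s := I) (f := q.getVert)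
  have := Finset.card_image_le (s := J) (f := fun i ↦ q.getVert (i + 1))
  simp only [Set.ncard_coe_finset, Finset.card_union_of_disjoint hIJ, Nat.card_eq_fintype_card] at *
  omega

theorem isHamiltonianGraph_of_crossing {u v : V} {q : G.Walk v u} (hq : q.IsPath)
    (hsupp : ∀ w, w ∈ q.support) {i : ℕ} (hi : i < q.length) (hlen : 2 ≤ q.length)
    (hu : G.Adj u (q.getVert i)) (hv : G.Adj v (q.getVert (i + 1))) : G.IsHamiltonianGraph := by
  let r := (q.drop (i + 1)).append (.cons hu (q.take i).reverse)
  have hperm : r.support.Perm q.support := by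
    simp only [r, Walk.support_append, Walk.support_cons, List.tail_cons, Walk.support_reverse,
      Walk.support_take, Walk.drop_support_eq_support_drop_min, Nat.min_eq_left hi]
    exact List.perm_append_comm.trans
      ((List.reverse_perm _).append_right _ |>.trans (by rw [List.take_append_drop]))
  have hr : r.IsPath := by
    rw [Walk.isPath_def, hperm.nodup_iff]
    exact hq.support_nodup
  refine ⟨v, .cons hv r, (Walk.cons_isCycle_iff _ _).mpr ⟨hr, fun he ↦ ?_⟩, fun w ↦ ?_⟩
  · have := hr.length_eq_one_of_mem_edges (by rwa [Sym2.eq_swap])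
    have := hperm.length_eq
    simp only [Walk.length_support] at this
    omega
  · simp [hperm.mem_iff, hsupp w]

theorem isHamiltonianGraph_of_sup_edge [Finite V] (hV : 3 ≤ Nat.card V) {u v : V}
    (hdeg : Nat.card V ≤ (G.neighborSet u).ncard + (G.neighborSet v).ncard)
    (h : (G ⊔ edge u v).IsHamiltonianGraph) : G.IsHamiltonianGraph := by
  classical
  by_contra hG
  have := Fintype.ofFinite V
  obtain ⟨q, hq, hsupp⟩ := exists_path_of_isHamiltonianGraph_sup_edge hG h
  obtain ⟨i, hi, hu, hv⟩ := exists_crossing hq hsupp hdeg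
  refine hG (isHamiltonianGraph_of_crossing hq hsupp hi ?_ hu hv)
  have := (hq.isHamiltonian_of_mem hsupp).length_eq
  rw [Nat.card_eq_fintype_card] at hV
  omega

theorem exists_closure [Finite V] (hV : 3 ≤ Nat.card V) (hG : ¬G.IsHamiltonianGraph) :
    ∃ H, G ≤ H ∧ ¬H.IsHamiltonianGraph ∧ ∀ u v, u ≠ v →
      Nat.card V ≤ (H.neighborSet u).ncard + (H.neighborSet v).ncard → H.Adj u v := by
  obtain ⟨H, hGH, hH⟩ := Finite.exists_le_maximal (p := fun H : SimpleGraph V ↦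
    ¬H.IsHamiltonianGraph) hG
  refine ⟨H, hGH, hH.prop, fun u v huv hdeg ↦ ?_⟩
  by_contra hadj
  exact hH.not_prop_of_gt (lt_sup_edge _ _ _ huv hadj)
    fun h ↦ hH.prop (isHamiltonianGraph_of_sup_edge hV hdeg h)

/-! ### Linear forests -/

theorem ncard_neighborSet_eq_degree (v : V) [Fintype (G.neighborSet v)] :
    (G.neighborSet v).ncard = G.degree v := by
  rw [← Nat.card_coe_set_eq, Nat.card_eq_fintype_card, card_neighborSet_eq_degree]

theorem mem_of_reachable {s : Set V} (hs : ∀ u ∈ s, G.neighborSet u ⊆ s) {u v : V}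
    (h : G.Reachable u v) (hu : u ∈ s) : v ∈ s :=
  (apply_eq_of_reachable (f := (· ∈ s))
    (fun x y hxy ↦ propext ⟨fun hx ↦ hs x hx hxy, fun hy ↦ hs y hy hxy.symm⟩) h).mp hu

theorem neighborSet_sup_edge_of_ne {u v w : V} (hu : w ≠ u) (hv : w ≠ v) :
    (G ⊔ edge u v).neighborSet w = G.neighborSet w := by
  ext x
  simp [edge_adj, hu, hv]

theorem neighborSet_sup_edge_left_subset (u v : V) :
    (G ⊔ edge u v).neighborSet u ⊆ insert v (G.neighborSet u) := fun x ↦ by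
  simp only [mem_neighborSet, sup_adj, edge_adj, Set.mem_insert_iff]
  grind

theorem ncard_neighborSet_sup_edge_le [Finite V] {k : ℕ} {u v : V}
    (hG : ∀ w, (G.neighborSet w).ncard ≤ k) (hu : (G.neighborSet u).ncard < k)
    (hv : (G.neighborSet v).ncard < k) (w : V) : ((G ⊔ edge u v).neighborSet w).ncard ≤ k := by
  have hend {x y : V} (hx : (G.neighborSet x).ncard < k) :
      ((G ⊔ edge x y).neighborSet x).ncard ≤ k :=
    ((Set.ncard_le_ncard (neighborSet_sup_edge_left_subset x y)).trans
      (Set.ncard_insert_le _ _)).trans hx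
  rcases eq_or_ne w u with rfl | hwu
  · exact hend hu
  rcases eq_or_ne w v with rfl | hwv
  · rw [edge_comm]
    exact hend hv
  rw [neighborSet_sup_edge_of_ne hwu hwv]
  exact hG w

theorem exists_reachable_ncard_neighborSet_le_one [Finite V] (hG : G.IsAcyclic) (v : V) :
    ∃ u, G.Reachable v u ∧ (G.neighborSet u).ncard ≤ 1 := by
  classical
  have := Fintype.ofFinite V
  let c := G.connectedComponentMk v
  have hc : ∀ x : c, ((c.toSimpleGraph).neighborSet x).ncard = (G.neighborSet x).ncard := fun x ↦ by
    rw [← Set.ncard_image_of_injective _ Subtype.val_injective]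
    congr 1
    ext y
    simp only [Set.mem_image, mem_neighborSet, Subtype.exists, ConnectedComponent.toSimpleGraph]
    constructor
    · rintro ⟨z, hz, h, rfl⟩
      exact h
    · exact fun h ↦ ⟨y, x.2 ▸ (ConnectedComponent.sound h.reachable).symm, h, rfl⟩
  have hreach : ∀ x : c, G.Reachable v x := fun x ↦ (ConnectedComponent.exact x.2).symm
  rcases subsingleton_or_nontrivial c with hsub | hnon
  · refine ⟨v, .refl v, ?_⟩
    rw [← hc ⟨v, rfl⟩]
    exact Set.ncard_le_one_of_subsingleton _
  · obtain ⟨x, _, _, hx, _⟩ := (hG.isTree_connectedComponent c).exists_ne_and_degree_eq_one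
    exact ⟨x, hreach x, by rw [← hc, ncard_neighborSet_eq_degree, hx]⟩

theorem neighborSet_subset_support [Finite V] {u v w : V} {p : G.Walk u v}
    (h : (G.neighborSet w).ncard ≤ (p.toSubgraph.neighborSet w).ncard) :
    G.neighborSet w ⊆ {x | x ∈ p.support} := fun x hx ↦ by
  rw [← Set.eq_of_subset_of_ncard_le (p.toSubgraph.neighborSet_subset w) h] at hx
  exact p.mem_verts_toSubgraph.mp (p.toSubgraph.edge_vert hx.symm)

theorem exists_hamiltonian_path_of_isTree [Finite V] [Nontrivial V] (hG : G.IsTree)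
    (hdeg : ∀ v, (G.neighborSet v).ncard ≤ 2) :
    ∃ (u v : V) (p : G.Walk u v), u ≠ v ∧ p.IsPath ∧ (∀ w, w ∈ p.support) ∧
      (G.neighborSet u).ncard = 1 ∧ (G.neighborSet v).ncard = 1 := by
  classical
  have := Fintype.ofFinite V
  obtain ⟨u, v, huv, hu, hv⟩ := hG.exists_ne_and_degree_eq_one
  rw [← ncard_neighborSet_eq_degree] at hu hv
  obtain ⟨p, hp⟩ := hG.connected.exists_isPath u v
  have hclosed : ∀ w ∈ {w | w ∈ p.support}, G.neighborSet w ⊆ {w | w ∈ p.support} := by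
    intro w hw
    refine neighborSet_subset_support ?_
    obtain ⟨i, rfl, hi⟩ := Walk.mem_support_iff_exists_getVert.mp hw
    rcases eq_or_ne i 0 with rfl | hi₀
    · simp [hp.neighborSet_toSubgraph_startpoint (Walk.not_nil_of_ne huv), hu]
    rcases hi.eq_or_lt with rfl | hi
    · simp [hp.neighborSet_toSubgraph_endpoint (Walk.not_nil_of_ne huv), hv]
    · exact (hdeg _).trans (hp.ncard_neighborSet_toSubgraph_internal_eq_two hi₀ hi).ge
  exact ⟨u, v, p, huv, hp,
    fun w ↦ mem_of_reachable hclosed (hG.connected u w) p.start_mem_support, hu, hv⟩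

theorem isHamiltonianGraph_of_linear_forest [Finite V] (hV : 3 ≤ Nat.card V) {F : SimpleGraph V}
    (hFH : F ≤ H) (hF : F.IsAcyclic) (hdeg : ∀ v, (F.neighborSet v).ncard ≤ 2)
    (hH : {v | (F.neighborSet v).ncard < 2}.Pairwise H.Adj) : H.IsHamiltonianGraph := by
  classical
  have := Fintype.ofFinite V
  obtain ⟨M, hFM, hM⟩ := Finite.exists_le_maximal
    (p := fun M ↦ M ≤ H ∧ M.IsAcyclic ∧ ∀ v, (M.neighborSet v).ncard ≤ 2) ⟨hFH, hF, hdeg⟩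
  obtain ⟨hMH, hMac, hMdeg⟩ := hM.prop
  have hadj {u v : V} (huv : u ≠ v) (hu : (M.neighborSet u).ncard < 2)
      (hv : (M.neighborSet v).ncard < 2) : H.Adj u v := by
    have hle (w : V) : (F.neighborSet w).ncard ≤ (M.neighborSet w).ncard :=
      Set.ncard_le_ncard fun x hx ↦ hFM hx
    exact hH ((hle u).trans_lt hu) ((hle v).trans_lt hv) huv
  have hreach {u v : V} (hu : (M.neighborSet u).ncard < 2) (hv : (M.neighborSet v).ncard < 2) :
      M.Reachable u v := by
    by_contra hnot
    have huv : u ≠ v := fun h ↦ hnot (h ▸ .refl u)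
    exact hM.not_prop_of_gt (lt_sup_edge _ _ _ huv fun h ↦ hnot h.reachable)
      ⟨sup_le hMH ((edge_le_iff _).mpr (.inr (hadj huv hu hv))),
        hMac.sup_edge_of_not_reachable hnot, ncard_neighborSet_sup_edge_le hMdeg hu hv⟩
  have : Nontrivial V := Finite.one_lt_card_iff_nontrivial.mp (by omega)
  have hconn : M.Connected := ⟨fun u v ↦ by
    obtain ⟨u', huu', hu'⟩ := exists_reachable_ncard_neighborSet_le_one hMac u
    obtain ⟨v', hvv', hv'⟩ := exists_reachable_ncard_neighborSet_le_one hMac v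
    exact huu'.trans ((hreach (by omega) (by omega)).trans hvv'.symm)⟩
  obtain ⟨u, v, p, huv, hp, hsupp, hu, hv⟩ := exists_hamiltonian_path_of_isTree ⟨hconn, hMac⟩ hMdeg
  refine ⟨v, .cons (hadj huv.symm (by omega) (by omega)) (p.mapLe hMH),
    (Walk.cons_isCycle_iff _ _).mpr ⟨hp.mapLe hMH, fun he ↦ ?_⟩, fun w ↦ by simp [hsupp w]⟩
  have hone := (hp.mapLe hMH).length_eq_one_of_mem_edges (by rwa [Sym2.eq_swap])
  have hlen := (hp.isHamiltonian_of_mem hsupp).length_eq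
  rw [Walk.length_map] at hone
  rw [Nat.card_eq_fintype_card] at hV
  omega

/-! ### Toughness against cycles through vertices of degree two -/

theorem card_le_card_edgeSet_add_card_connectedComponent [Finite V] :
    Nat.card V ≤ Nat.card G.edgeSet + Nat.card G.ConnectedComponent := by
  -- Joining one vertex of each component to a new vertex makes the graph connected.
  let hubEdge (c : G.ConnectedComponent) : Sym2 (Option V) := s(none, some c.out)
  let K : SimpleGraph (Option V) :=
    fromEdgeSet (Sym2.map some '' G.edgeSet ∪ Set.range hubEdge)
  have hsome {u v : V} (h : G.Reachable u v) : K.Reachable (some u) (some v) :=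
    h.map ⟨some, fun {a b} hab ↦ (fromEdgeSet_adj _).mpr
      ⟨.inl ⟨s(a, b), hab, rfl⟩, by simpa using hab.ne⟩⟩
  have hnone : ∀ v, K.Reachable none v
    | none => .refl _
    | some v => by
      have hadj : K.Adj none (some (G.connectedComponentMk v).out) :=
        (fromEdgeSet_adj _).mpr ⟨.inr ⟨_, rfl⟩, by simp⟩
      exact hadj.reachable.trans (hsome (ConnectedComponent.exact (Quot.out_eq _)))
  have hK : K.Connected := ⟨fun u v ↦ (hnone u).symm.trans (hnone v)⟩
  have hedges : K.edgeSet.ncard ≤ G.edgeSet.ncard + Nat.card G.ConnectedComponent :=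
    calc K.edgeSet.ncard
      _ ≤ (Sym2.map some '' G.edgeSet ∪ Set.range hubEdge).ncard :=
        Set.ncard_le_ncard ((edgeSet_fromEdgeSet _).trans_subset Set.sdiff_subset)
      _ ≤ (Sym2.map some '' G.edgeSet).ncard + (Set.range hubEdge).ncard := Set.ncard_union_le _ _
      _ ≤ _ := by
        refine add_le_add (Set.ncard_image_le) ?_
        rw [← Set.image_univ, ← Set.ncard_univ]
        exact Set.ncard_image_le
  have := hK.card_vert_le_card_edgeSet_add_one
  rw [Finite.card_option, Nat.card_coe_set_eq] at this
  rw [Nat.card_coe_set_eq]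
  omega

theorem card_le_card_connectedComponent_induce [Finite V] {W S : Finset V} (hWS : Disjoint W S)
    (hW : ∀ t ∈ W, (G.neighborSet t).ncard ≤ 2)
    (hS : ∀ s ∈ S, 2 ≤ (G.neighborSet s ∩ W).ncard) :
    S.card ≤ Nat.card (G.induce (W : Set V)).ConnectedComponent := by
  classical
  have := Fintype.ofFinite V
  have hcross : 2 * S.card ≤ ∑ t ∈ W, (S.filter (G.Adj t)).card :=
    calc 2 * S.card
      _ = ∑ _s ∈ S, 2 := by simp [mul_comm]
      _ ≤ ∑ s ∈ S, (W.filter (G.Adj · s)).card := Finset.sum_le_sum fun s hs ↦ by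
        rw [← Set.ncard_coe_finset]
        exact (hS s hs).trans (Set.ncard_le_ncard fun t ht ↦ by
          simpa [G.adj_comm, and_comm] using ht)
      _ = ∑ t ∈ W, (S.filter (G.Adj t)).card :=
        (Finset.sum_card_bipartiteAbove_eq_sum_card_bipartiteBelow G.Adj).symm
  have hinner : ∑ t ∈ W, (W.filter (G.Adj t)).card =
      2 * Nat.card (G.induce (W : Set V)).edgeSet := by
    rw [Nat.card_eq_fintype_card, ← edgeFinset_card, ← sum_degrees_eq_twice_card_edges,
      ← Finset.sum_coe_sort]
    refine Finset.sum_congr rfl fun t _ ↦ ?_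
    rw [← ncard_neighborSet_eq_degree, ← Set.ncard_image_of_injective _ Subtype.val_injective,
      ← Set.ncard_coe_finset]
    congr 1
    ext x
    simp [and_comm]
  have hdeg : ∀ t ∈ W, (S.filter (G.Adj t)).card + (W.filter (G.Adj t)).card ≤ 2 := fun t ht ↦ by
    rw [← Finset.card_union_of_disjoint (Finset.disjoint_filter_filter hWS.symm),
      ← Set.ncard_coe_finset]
    exact (Set.ncard_le_ncard fun x hx ↦ by
      simp only [Finset.coe_union, Finset.coe_filter, Set.mem_union, Set.mem_ofPred_eq] at hx
      tauto).trans (hW t ht)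
  have htotal := Finset.sum_le_sum hdeg
  have hforest := card_le_card_edgeSet_add_card_connectedComponent (G := G.induce (W : Set V))
  simp only [Finset.sum_add_distrib, hinner, Finset.sum_const, smul_eq_mul] at htotal
  simp only [Finset.coe_sort_coe, Nat.card_eq_fintype_card, Fintype.card_coe] at *
  omega

theorem card_connectedComponent_induce_lt_of_tough [Finite V] (hG : G.Tough) {W S : Finset V}
    (hne : W.Nonempty) (hWS : Disjoint W S) (hW : ∀ t ∈ W, G.neighborSet t ⊆ W ∪ S) {z : V}
    (hzW : z ∉ W) (hzS : z ∉ S) :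
    Nat.card (G.induce (W : Set V)).ConnectedComponent < S.card := by
  classical
  let K := G.induce (W : Set V)
  let f (v : V) : Option K.ConnectedComponent :=
    if h : v ∈ W then some (K.connectedComponentMk ⟨v, h⟩) else none
  have hstay {u v : V} (hu : u ∈ W) (hv : v ∉ S) (huv : G.Adj u v) : v ∈ W :=
    (hW u hu huv).resolve_right hv
  have hf : ∀ u ∉ S, ∀ v ∉ S, G.Adj u v → f u = f v := fun u hu v hv huv ↦ by
    by_cases huW : u ∈ W
    · have hvW := hstay huW hv huv
      have hK : K.Adj ⟨u, huW⟩ ⟨v, hvW⟩ := huv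
      simpa [f, huW, hvW] using ConnectedComponent.sound hK.reachable
    · have hvW : v ∉ W := fun hvW ↦ huW (hstay hvW hu huv.symm)
      simp [f, huW, hvW]
  have hsurj : ∀ i, ∃ v ∉ S, f v = i
    | none => ⟨z, hzS, by simp [f, hzW]⟩
    | some c => by
      obtain ⟨t, rfl⟩ := c.exists_rep
      exact ⟨t, Finset.disjoint_left.mp hWS t.2, dif_pos t.2⟩
  obtain ⟨t, ht⟩ := hne
  have : Nonempty K.ConnectedComponent := ⟨K.connectedComponentMk ⟨t, ht⟩⟩
  have hmany := card_le_of_tough hG S f hf hsurj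
  rwa [Finite.card_option] at hmany

theorem card_lt_of_tough_of_isolated [Finite V] (hG : G.Tough) {W S : Finset V}
    (hne : W.Nonempty) (hWS : Disjoint W S) (hW : ∀ t ∈ W, G.neighborSet t ⊆ S) {z : V}
    (hzW : z ∉ W) (hzS : z ∉ S) : W.card < S.card := by
  have hbot : G.induce (W : Set V) = ⊥ := by
    ext u v
    simpa using fun huv : G.Adj u v ↦ Finset.disjoint_left.mp hWS v.2 (hW u u.2 huv)
  have hforest := card_le_card_edgeSet_add_card_connectedComponent (G := G.induce (W : Set V))
  have hlt := card_connectedComponent_induce_lt_of_tough hG hne hWS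
    (fun t ht ↦ (hW t ht).trans Set.subset_union_right) hzW hzS
  simp only [hbot, edgeSet_bot, Nat.card_coe_set_eq, Set.ncard_empty, Set.ncard_coe_finset] at *
  omega

/-- The subgraph of `G` formed by the edges with at least one end in `T`. For `T` the set of
vertices of degree 2, a Hamiltonian cycle has to use all of them. -/
def touching (G : SimpleGraph V) (T : Set V) : SimpleGraph V where
  Adj u v := G.Adj u v ∧ (u ∈ T ∨ v ∈ T)
  symm := ⟨fun _ _ h ↦ ⟨h.1.symm, h.2.symm⟩⟩
  loopless := ⟨fun _ h ↦ G.irrefl h.1⟩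

theorem touching_le (T : Set V) : touching G T ≤ G := fun _ _ h ↦ h.1

theorem neighborSet_touching_of_mem {T : Set V} {t : V} (ht : t ∈ T) :
    (touching G T).neighborSet t = G.neighborSet t := by
  ext; simp [touching, ht]

theorem neighborSet_touching_of_notMem {T : Set V} {v : V} (hv : v ∉ T) :
    (touching G T).neighborSet v = G.neighborSet v ∩ T := by
  ext; simp [touching, hv]

theorem ncard_neighborSet_touching_le {T : Set V} {k : ℕ}
    (hT : ∀ t ∈ T, (G.neighborSet t).ncard ≤ k) (hle : ∀ v, (G.neighborSet v ∩ T).ncard ≤ k)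
    (v : V) : ((touching G T).neighborSet v).ncard ≤ k := by
  by_cases hv : v ∈ T
  · exact neighborSet_touching_of_mem (G := G) hv ▸ hT v hv
  · exact neighborSet_touching_of_notMem (G := G) hv ▸ hle v

theorem isAcyclic_touching [Finite V] (hG : G.Tough) (hham : ¬G.IsHamiltonianGraph) {T : Set V}
    (hT : ∀ t ∈ T, (G.neighborSet t).ncard ≤ 2)
    (hle : ∀ v, (G.neighborSet v ∩ T).ncard ≤ 2) : (touching G T).IsAcyclic := by
  classical
  have := Fintype.ofFinite V
  intro a p hp
  let W : Finset V := {v | v ∈ p.support ∧ v ∈ T}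
  let S : Finset V := {v | v ∈ p.support ∧ v ∉ T}
  have hdeg := ncard_neighborSet_touching_le hT hle
  have hclosed {u v : V} (hu : u ∈ p.support) (huv : (touching G T).Adj u v) : v ∈ p.support :=
    neighborSet_subset_support ((hdeg u).trans (hp.ncard_neighborSet_toSubgraph_eq_two hu).ge) huv
  have hW : ∀ t ∈ W, G.neighborSet t ⊆ W ∪ S := fun t ht v htv ↦ by
    simp only [W, S, Finset.coe_filter, Finset.mem_filter, Finset.mem_univ, true_and] at ht ⊢
    have := hclosed ht.1 ⟨htv, .inl ht.2⟩
    grind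
  have hS : ∀ s ∈ S, 2 ≤ (G.neighborSet s ∩ W).ncard := fun s hs ↦ by
    simp only [S, Finset.mem_filter, Finset.mem_univ, true_and] at hs
    rw [← hp.ncard_neighborSet_toSubgraph_eq_two hs.1]
    refine Set.ncard_le_ncard fun x hx ↦ ?_
    have hsx : (touching G T).Adj s x := p.toSubgraph.adj_sub hx
    simpa [W] using ⟨hsx.1, hclosed hs.1 hsx, hsx.2.resolve_left hs.2⟩
  have hWne : W.Nonempty := by
    have hadj := p.adj_snd hp.not_nil
    rcases hadj.2 with h | h
    · exact ⟨a, by simp [W, h]⟩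
    · exact ⟨p.snd, by simp [W, h]⟩
  refine hham (isHamiltonianGraph_mono (touching_le T) ⟨a, p, hp, fun z ↦ ?_⟩)
  by_contra hz
  have hWS : Disjoint W S := Finset.disjoint_filter.mpr fun _ _ h h' ↦ h'.2 h.2
  refine (card_connectedComponent_induce_lt_of_tough hG hWne hWS hW (z := z) ?_ ?_).not_ge
    (card_le_card_connectedComponent_induce hWS
      (fun t ht ↦ hT t (Finset.mem_filter.mp ht).2.2) hS)
  all_goals simp [W, S, hz]

theorem exists_three_le_ncard_inter [Finite V] (hV : 3 ≤ Nat.card V) (hG : G.Tough)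
    (hham : ¬G.IsHamiltonianGraph)
    (hdeg : ∀ v, (G.neighborSet v).ncard = 2 ∨ Nat.card V ≤ 2 * (G.neighborSet v).ncard) :
    ∃ c, 3 ≤ (G.neighborSet c ∩ {x | (G.neighborSet x).ncard = 2}).ncard := by
  by_contra! hno
  let T : Set V := {x | (G.neighborSet x).ncard = 2}
  have hle (v : V) : (G.neighborSet v ∩ T).ncard ≤ 2 := Nat.lt_succ_iff.mp (hno v)
  obtain ⟨H, hGH, hH, hadj⟩ := exists_closure hV hham
  have hmem {t : V} (ht : t ∈ T) : ((touching G T).neighborSet t).ncard = 2 := by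
    rwa [neighborSet_touching_of_mem ht]
  refine hH (isHamiltonianGraph_of_linear_forest hV ((touching_le T).trans hGH)
    (isAcyclic_touching hG hham (fun t ht ↦ ht.le) hle)
    (ncard_neighborSet_touching_le (fun t ht ↦ ht.le) hle) fun u hu v hv huv ↦ ?_)
  have hlarge {w : V} (hw : ((touching G T).neighborSet w).ncard < 2) :
      Nat.card V ≤ 2 * (H.neighborSet w).ncard :=
    ((hdeg w).resolve_left fun h ↦ hw.ne (hmem h)).trans
      (Nat.mul_le_mul_left 2 (Set.ncard_le_ncard fun x hx ↦ hGH hx))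
  have := hlarge hu
  have := hlarge hv
  exact hadj u v huv (by omega)

theorem not_isHamiltonianGraph_of_three_le_ncard_inter [Finite V] {c : V}
    (hc : 3 ≤ (G.neighborSet c ∩ {x | (G.neighborSet x).ncard = 2}).ncard) :
    ¬G.IsHamiltonianGraph := by
  rintro ⟨a, p, hp, hsupp⟩
  have hsub : G.neighborSet c ∩ {x | (G.neighborSet x).ncard = 2} ⊆ p.toSubgraph.neighborSet c := by
    rintro x ⟨hcx, hx⟩
    have heq := Set.eq_of_subset_of_ncard_le (p.toSubgraph.neighborSet_subset x)
      (by rw [hp.ncard_neighborSet_toSubgraph_eq_two (hsupp x), hx])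
    have hxc : c ∈ p.toSubgraph.neighborSet x := heq ▸ hcx.symm
    exact hxc.symm
  have := Set.ncard_le_ncard hsub
  rw [hp.ncard_neighborSet_toSubgraph_eq_two (hsupp c)] at this
  omega

/-! ### Tripod graphs -/

/-- The shape of every Harris graph on 8 vertices. The core `D` lives on the center `c = inl 0` and
the feet `pᵢ = inl i`; the hub `w = inr 0` is joined to the whole core, and the toe `xᵢ = inr i` to
`c` and `pᵢ` only, where `i = 1, 2, 3`. -/
def tripodGraph (D : SimpleGraph (Fin 4)) : SimpleGraph (Fin 4 ⊕ Fin 4) where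
  Adj
    | .inl a, .inl b => D.Adj a b
    | .inl a, .inr b => a = 0 ∨ b = 0 ∨ a = b
    | .inr b, .inl a => a = 0 ∨ b = 0 ∨ a = b
    | .inr _, .inr _ => False
  symm := ⟨by rintro (a | a) (b | b) h <;> first | exact h | exact h.symm⟩
  loopless := ⟨by rintro (a | a) h <;> first | exact D.irrefl h | exact h⟩

instance (D : SimpleGraph (Fin 4)) [DecidableRel D.Adj] : DecidableRel (tripodGraph D).Adj
  | .inl a, .inl b => inferInstanceAs (Decidable (D.Adj a b))
  | .inl a, .inr b => inferInstanceAs (Decidable (a = 0 ∨ b = 0 ∨ a = b))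
  | .inr b, .inl a => inferInstanceAs (Decidable (a = 0 ∨ b = 0 ∨ a = b))
  | .inr _, .inr _ => inferInstanceAs (Decidable False)

theorem ncard_neighborSet_tripodGraph_inl (D : SimpleGraph (Fin 4)) (a : Fin 4) :
    ((tripodGraph D).neighborSet (.inl a)).ncard =
      (D.neighborSet a).ncard + if a = 0 then 4 else 2 := by
  have hunion : (tripodGraph D).neighborSet (.inl a) =
      .inl '' D.neighborSet a ∪
        .inr '' (({b | a = 0 ∨ b = 0 ∨ a = b} : Finset (Fin 4)) : Set _) := by
    ext (b | b) <;> simp [tripodGraph]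
  rw [hunion, Set.ncard_union_eq (by simp [Set.disjoint_left]),
    Set.ncard_image_of_injective _ Sum.inl_injective,
    Set.ncard_image_of_injective _ Sum.inr_injective, Set.ncard_coe_finset]
  congr 1
  fin_cases a <;> rfl

theorem ncard_neighborSet_tripodGraph_inr (D : SimpleGraph (Fin 4)) (b : Fin 4) :
    ((tripodGraph D).neighborSet (.inr b)).ncard = if b = 0 then 4 else 2 := by
  have himage : (tripodGraph D).neighborSet (.inr b) =
      .inl '' (({a | a = 0 ∨ b = 0 ∨ a = b} : Finset (Fin 4)) : Set _) := by
    ext (a | a) <;> simp [tripodGraph]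
  rw [himage, Set.ncard_image_of_injective _ Sum.inl_injective, Set.ncard_coe_finset]
  fin_cases b <;> rfl

theorem even_ncard_neighborSet_tripodGraph_iff {D : SimpleGraph (Fin 4)} :
    (∀ v, Even ((tripodGraph D).neighborSet v).ncard) ↔ ∀ a, Even (D.neighborSet a).ncard := by
  rw [Sum.forall]
  simp only [ncard_neighborSet_tripodGraph_inl, ncard_neighborSet_tripodGraph_inr]
  grind

theorem not_tough_tripodGraph_bot : ¬(tripodGraph ⊥).Tough := fun h ↦ by
  let S : Finset (Fin 4 ⊕ Fin 4) := {.inl 0, .inr 0}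
  let leg : Fin 4 → Fin 3 := ![0, 0, 1, 2]
  have hleg : ∀ u ∉ S, ∀ v ∉ S,
      (tripodGraph ⊥).Adj u v → Sum.elim leg leg u = Sum.elim leg leg v := by decide
  have hsurj : ∀ i, ∃ v ∉ S, Sum.elim leg leg v = i := by decide
  have hcard := card_le_of_tough h S (Sum.elim leg leg) hleg hsurj
  simp [S] at hcard

theorem adj_zero_iff_of_even {D : SimpleGraph (Fin 4)} (hD : ∀ a, Even (D.neighborSet a).ncard) :
    (D.Adj 0 1 ↔ Xor (D.Adj 1 2) (D.Adj 1 3)) ∧ (D.Adj 0 2 ↔ Xor (D.Adj 1 2) (D.Adj 2 3)) ∧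
      (D.Adj 0 3 ↔ Xor (D.Adj 1 3) (D.Adj 2 3)) := by
  classical
  have hdeg (a : Fin 4) : Even (∑ b, if D.Adj a b then 1 else 0) := by
    rw [← Finset.card_filter, ← neighborFinset_eq_filter, card_neighborFinset_eq_degree,
      ← ncard_neighborSet_eq_degree]
    exact hD a
  have h₁ := hdeg 1
  have h₂ := hdeg 2
  have h₃ := hdeg 3
  simp only [Fin.sum_univ_four, D.irrefl, D.adj_comm 1 0, D.adj_comm 2 0, D.adj_comm 3 0,
    D.adj_comm 2 1, D.adj_comm 3 1, D.adj_comm 3 2] at h₁ h₂ h₃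
  refine ⟨?_, ?_, ?_⟩
  all_goals grind [Xor]

theorem ext_of_even {D D' : SimpleGraph (Fin 4)} (hD : ∀ a, Even (D.neighborSet a).ncard)
    (hD' : ∀ a, Even (D'.neighborSet a).ncard) (h₁₂ : D.Adj 1 2 ↔ D'.Adj 1 2)
    (h₁₃ : D.Adj 1 3 ↔ D'.Adj 1 3) (h₂₃ : D.Adj 2 3 ↔ D'.Adj 2 3) : D = D' := by
  obtain ⟨h₀₁, h₀₂, h₀₃⟩ := adj_zero_iff_of_even hD
  obtain ⟨h₀₁', h₀₂', h₀₃'⟩ := adj_zero_iff_of_even hD'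
  have hlt : ∀ a b, a < b → (D.Adj a b ↔ D'.Adj a b) := by
    simp [Fin.forall_fin_succ, *]
  ext a b
  rcases lt_trichotomy a b with h | rfl | h
  · exact hlt a b h
  · simp
  · rw [D.adj_comm, D'.adj_comm, hlt b a h]

/-- The cores of the Harris graphs on 8 vertices: the three nonempty even graphs on `Fin 4` up to
permuting `1, 2, 3`, listed by decreasing number of edges among `1, 2, 3`. -/
def core (k : Fin 3) : SimpleGraph (Fin 4) :=
  fromEdgeSet ((![{s(1, 2), s(1, 3), s(2, 3)}, {s(1, 2), s(1, 3), s(0, 2), s(0, 3)},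
    {s(1, 2), s(0, 1), s(0, 2)}] : Fin 3 → Finset (Sym2 (Fin 4))) k)

instance (k : Fin 3) : DecidableRel (core k).Adj :=
  inferInstanceAs (DecidableRel (fromEdgeSet _).Adj)

theorem even_ncard_neighborSet_core (k : Fin 3) (a : Fin 4) :
    Even ((core k).neighborSet a).ncard := by
  rw [ncard_neighborSet_eq_degree]
  decide +revert

theorem exists_perm_comap_eq_core {D : SimpleGraph (Fin 4)}
    (hD : ∀ a, Even (D.neighborSet a).ncard) (hne : D ≠ ⊥) :
    ∃ (k : Fin 3) (σ : Equiv.Perm (Fin 4)), σ 0 = 0 ∧ D.comap σ = core k := by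
  have hcase (k : Fin 3) (σ : Equiv.Perm (Fin 4)) (hσ : σ 0 = 0)
      (h₁₂ : D.Adj (σ 1) (σ 2) ↔ (core k).Adj 1 2) (h₁₃ : D.Adj (σ 1) (σ 3) ↔ (core k).Adj 1 3)
      (h₂₃ : D.Adj (σ 2) (σ 3) ↔ (core k).Adj 2 3) :
      ∃ (k : Fin 3) (σ : Equiv.Perm (Fin 4)), σ 0 = 0 ∧ D.comap σ = core k := by
    refine ⟨k, σ, hσ, ext_of_even (fun a ↦ ?_) (even_ncard_neighborSet_core k) h₁₂ h₁₃ h₂₃⟩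
    rw [← Nat.card_coe_set_eq, Nat.card_congr ((Iso.comap σ D).mapNeighborSet a),
      Nat.card_coe_set_eq]
    exact hD _
  have h₂₁ := D.adj_comm 2 1
  have h₃₁ := D.adj_comm 3 1
  have h₃₂ := D.adj_comm 3 2
  by_cases h₁₂ : D.Adj 1 2 <;> by_cases h₁₃ : D.Adj 1 3 <;> by_cases h₂₃ : D.Adj 2 3
  · apply hcase 0 1 <;> simp [core, *]
  · apply hcase 1 1 <;> simp [core, *]
  · apply hcase 1 (Equiv.swap 1 2) <;> simp [core, Equiv.swap_apply_def, *]
  · apply hcase 2 1 <;> simp [core, *]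
  · apply hcase 1 (Equiv.swap 1 3) <;> simp [core, Equiv.swap_apply_def, *]
  · apply hcase 2 (Equiv.swap 2 3) <;> simp [core, Equiv.swap_apply_def, *]
  · apply hcase 2 (Equiv.swap 1 3) <;> simp [core, Equiv.swap_apply_def, *]
  · exact absurd (ext_of_even hD (by simp) (by simpa) (by simpa) (by simpa)) hne

/-! ### The tripod labelling of a Harris graph on 8 vertices -/

section Legs

variable {ι : Type*} {c : V} {x p : ι → V}

theorem toe_ne_center (hN : ∀ i, G.neighborSet (x i) = {c, p i}) (i : ι) : x i ≠ c :=
  (show G.Adj (x i) c from by simp [← mem_neighborSet, hN]).ne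

variable [Finite V] (hι : ∀ i j : ι, ∃ k, k ≠ i ∧ k ≠ j)
include hι

theorem foot_ne_center (hG : G.Tough) (hx : x.Injective)
    (hN : ∀ i, G.neighborSet (x i) = {c, p i}) (i : ι) : p i ≠ c := fun hp ↦ by
  have hc := toe_ne_center hN
  obtain ⟨k, hk, -⟩ := hι i i
  have hlt := card_lt_of_tough_of_isolated hG (W := {x i}) (S := {c}) (z := x k) (by simp)
    (by simp [hc]) (by simp [-Set.subset_singleton_iff, hN, hp]) (by simp [hx.eq_iff, hk])
    (by simp [hc])
  simp at hlt

theorem foot_ne_toe (hG : G.Tough) (hx : x.Injective)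
    (hN : ∀ i, G.neighborSet (x i) = {c, p i}) (i j : ι) : p i ≠ x j := fun hp ↦ by
  classical
  have hc := toe_ne_center hN
  have hij : G.Adj (x i) (x j) := by simp [← mem_neighborSet, hN, hp]
  have hpj : p j = x i := by
    have : x i ∈ G.neighborSet (x j) := hij.symm
    simpa [hN, hc, eq_comm] using this
  obtain ⟨k, hki, hkj⟩ := hι i j
  have hlt := card_connectedComponent_induce_lt_of_tough hG (W := {x i, x j}) (S := {c}) (z := x k)
    (by simp) (by simp [(hc _).symm]) (by simp [hN, hp, hpj, Set.insert_subset_iff])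
    (by simp [hx.eq_iff, hki, hkj]) (by simp [hc])
  have : Nonempty (({x i, x j} : Finset V) : Set V) := ⟨x i, by simp⟩
  rw [Finset.card_singleton, Nat.lt_one_iff] at hlt
  exact Nat.card_pos.ne' hlt

theorem foot_injective (hG : G.Tough) (hx : x.Injective)
    (hN : ∀ i, G.neighborSet (x i) = {c, p i}) : p.Injective := fun i j hp ↦ by
  classical
  by_contra hij
  have hc := toe_ne_center hN
  have hfoot := foot_ne_toe hι hG hx hN
  obtain ⟨k, hki, hkj⟩ := hι i j
  have hlt := card_lt_of_tough_of_isolated hG (W := {x i, x j}) (S := {c, p i}) (z := x k)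
    (by simp) (by simp [(hc _).symm, hfoot]) (by simp [hN, hp]) (by simp [hx.eq_iff, hki, hkj])
    (by simp [hc, (hfoot _ _).symm])
  rw [Finset.card_pair (hx.ne hij), Finset.card_pair (foot_ne_center hι hG hx hN i).symm] at hlt
  exact lt_irrefl _ hlt

end Legs

theorem exists_legs [Finite V] {n : ℕ} {c : V}
    (hc : n ≤ (G.neighborSet c ∩ {x | (G.neighborSet x).ncard = 2}).ncard) :
    ∃ x p : Fin n → V, x.Injective ∧ ∀ i, G.neighborSet (x i) = {c, p i} := by
  obtain ⟨t, ht, htcard⟩ := Set.exists_subset_card_eq hc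
  let x : Fin n ≃ t := (Finite.equivFinOfCardEq htcard).symm
  have hp (i : Fin n) : ∃ p, G.neighborSet (x i) = {c, p} := by
    obtain ⟨a, b, -, hab⟩ := Set.ncard_eq_two.mp (ht (x i).2).2
    rcases (hab ▸ (ht (x i).2).1.symm : c ∈ ({a, b} : Set V)) with rfl | rfl
    · exact ⟨b, hab⟩
    · exact ⟨a, hab.trans (Set.pair_comm _ _)⟩
  choose p hN using hp
  exact ⟨_, p, Subtype.val_injective.comp x.injective, hN⟩

/-- A labelling of the vertices of `G` by those of the graphs `tripodGraph D` that is correct at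
the toes `inr 1, inr 2, inr 3`. -/
def IsTripodLabeling (G : SimpleGraph V) (e : Fin 4 ⊕ Fin 4 ≃ V) : Prop :=
  ∀ i ≠ 0, G.neighborSet (e (.inr i)) = {e (.inl 0), e (.inl i)}

theorem exists_isTripodLabeling (hV : Nat.card V = 8) (hG : G.Tough) {c : V}
    (hc : 3 ≤ (G.neighborSet c ∩ {x | (G.neighborSet x).ncard = 2}).ncard) :
    ∃ e, IsTripodLabeling G e := by
  have : Finite V := Nat.finite_of_card_ne_zero (by omega)
  obtain ⟨x, p, hx, hN⟩ := exists_legs hc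
  have hι : ∀ i j : Fin 3, ∃ k, k ≠ i ∧ k ≠ j := by decide
  let q : Fin 4 → V := Fin.cons c p
  have hq : q.Injective := Fin.cons_injective_iff.mpr
    ⟨fun ⟨i, hi⟩ ↦ foot_ne_center hι hG hx hN i hi, foot_injective hι hG hx hN⟩
  have hqx : ∀ a i, q a ≠ x i :=
    Fin.cases (fun i ↦ (toe_ne_center hN i).symm) (foot_ne_toe hι hG hx hN)
  obtain ⟨w, hw⟩ : ∃ w, w ∉ Set.range (Sum.elim q x) := by
    by_contra! hsurj
    have := Nat.card_le_card_of_surjective _ hsurj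
    simp [hV] at this
  simp only [Set.Sum.elim_range, Set.mem_union, not_or] at hw
  have he : (Sum.elim q (Fin.cons w x : Fin 4 → V)).Injective :=
    hq.sumElim (Fin.cons_injective_iff.mpr ⟨hw.2, hx⟩)
      fun a ↦ Fin.cases (fun h ↦ hw.1 ⟨a, h⟩) (hqx a)
  refine ⟨.ofBijective _ (he.bijective_of_nat_card_le (by simp [hV])), fun i hi ↦ ?_⟩
  obtain ⟨i, rfl⟩ := Fin.exists_succ_eq.mpr hi
  exact hN i

namespace IsTripodLabeling

variable {e : Fin 4 ⊕ Fin 4 ≃ V}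

theorem adj_inr_iff (he : IsTripodLabeling G e) {b : Fin 4} (hb : b ≠ 0) (v : Fin 4 ⊕ Fin 4) :
    G.Adj (e (.inr b)) (e v) ↔ v = .inl 0 ∨ v = .inl b := by
  rw [← mem_neighborSet, he b hb]
  simp

theorem not_adj_inr_inr (he : IsTripodLabeling G e) (b b' : Fin 4) :
    ¬G.Adj (e (.inr b)) (e (.inr b')) := fun h ↦ by
  rcases eq_or_ne b 0 with rfl | hb
  · have hb' : b' ≠ 0 := by rintro rfl; exact G.irrefl h
    simpa using (he.adj_inr_iff hb' _).mp h.symm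
  · simpa using (he.adj_inr_iff hb _).mp h

theorem neighborSet_inr_subset (he : IsTripodLabeling G e) (b : Fin 4) :
    G.neighborSet (e (.inr b)) ⊆ Set.range (e ∘ .inl) :=
  e.surjective.forall.mpr fun
    | .inl a, _ => ⟨a, rfl⟩
    | .inr b', h => (he.not_adj_inr_inr b b' h).elim

theorem adj_hub_foot (hG : G.Tough) (he : IsTripodLabeling G e) {a : Fin 4} (ha : a ≠ 0) :
    G.Adj (e (.inr 0)) (e (.inl a)) := by
  classical
  have : Finite V := .of_equiv _ e
  by_contra hnot
  let I : Finset (Fin 4) := {i | i ≠ 0 ∧ G.Adj (e (.inr 0)) (e (.inl i))}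
  have hI (i : Fin 4) : i ∈ I ↔ i ≠ 0 ∧ G.Adj (e (.inr 0)) (e (.inl i)) := by simp [I]
  have hlt := card_lt_of_tough_of_isolated hG (W := (insert 0 I).map (.trans .inr e.toEmbedding))
    (S := (insert 0 I).map (.trans .inl e.toEmbedding)) (z := e (.inl a)) (by simp)
    (by simp [Finset.disjoint_left]) ?_ (by simp) (by simp [hI, ha, hnot])
  · simp only [Finset.card_map, lt_irrefl] at hlt
  · simp only [Finset.mem_map, forall_exists_index, and_imp, forall_apply_eq_imp_iff₂]
    intro i hi
    rcases eq_or_ne i 0 with rfl | hi₀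
    · intro v hv
      obtain ⟨b, rfl⟩ := he.neighborSet_inr_subset 0 hv
      have : b ∈ insert 0 I := by
        rw [Finset.mem_insert, hI]
        exact or_iff_not_imp_left.mpr fun hb ↦ ⟨hb, hv⟩
      simpa using this
    · have := he i hi₀
      simp_all [Set.insert_subset_iff]

theorem adj_hub_center (hG : G.Tough) (he : IsTripodLabeling G e)
    (heven : Even (G.neighborSet (e (.inr 0))).ncard) : G.Adj (e (.inr 0)) (e (.inl 0)) := by
  by_contra hnot
  have : G.neighborSet (e (.inr 0)) = e ∘ .inl '' {0}ᶜ := by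
    refine subset_antisymm (fun v hv ↦ ?_)
      (Set.image_subset_iff.mpr fun a ha ↦ he.adj_hub_foot hG ha)
    obtain ⟨a, rfl⟩ := he.neighborSet_inr_subset 0 hv
    exact ⟨a, fun ha ↦ hnot (ha ▸ hv), rfl⟩
  rw [this, Set.ncard_image_of_injective _ (e.injective.comp Sum.inl_injective),
    Set.ncard_compl, Set.ncard_singleton, Nat.card_eq_fintype_card, Fintype.card_fin] at heven
  exact absurd heven (by decide)

theorem nonempty_iso (hG : G.Tough) (he : IsTripodLabeling G e)
    (heven : Even (G.neighborSet (e (.inr 0))).ncard) :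
    Nonempty (tripodGraph (G.comap (e ∘ .inl)) ≃g G) := by
  have hhub (a : Fin 4) : G.Adj (e (.inr 0)) (e (.inl a)) := by
    rcases eq_or_ne a 0 with rfl | ha
    · exact he.adj_hub_center hG heven
    · exact he.adj_hub_foot hG ha
  have hrl (b a : Fin 4) : G.Adj (e (.inr b)) (e (.inl a)) ↔ a = 0 ∨ b = 0 ∨ a = b := by
    rcases eq_or_ne b 0 with rfl | hb
    · simp [hhub]
    · simp [he.adj_inr_iff hb, hb]
  refine ⟨e, ?_⟩
  rintro (a | b) (a' | b')
  · exact .rfl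
  · exact (G.adj_comm _ _).trans (hrl b' a)
  · exact hrl b a'
  · exact iff_of_false (he.not_adj_inr_inr b b') id

end IsTripodLabeling

theorem exists_iso_tripodGraph (hV : Nat.card V = 8) (hG : G.IsHarris) :
    ∃ D : SimpleGraph (Fin 4), Nonempty (tripodGraph D ≃g G) := by
  obtain ⟨hfin, htough, ⟨hconn, heven⟩, hham⟩ := hG
  have heven (v : V) : Even (G.neighborSet v).ncard :=
    Nat.card_coe_set_eq (G.neighborSet v) ▸ heven v
  have hpos (v : V) : 0 < (G.neighborSet v).ncard := by
    have : Nontrivial V := Finite.one_lt_card_iff_nontrivial.mp (by omega)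
    obtain ⟨u, hu⟩ := hconn.preconnected.exists_adj_of_nontrivial v
    exact (Set.ncard_pos).mpr ⟨u, hu⟩
  obtain ⟨c, hc⟩ := exists_three_le_ncard_inter (by omega) htough hham fun v ↦ by
    have := hpos v
    have := heven v
    grind
  obtain ⟨e, he⟩ := exists_isTripodLabeling hV htough hc
  exact ⟨_, he.nonempty_iso htough (heven _)⟩

theorem exists_iso_tripodGraph_core (hV : Nat.card V = 8) (hG : G.IsHarris) :
    ∃ k, Nonempty (tripodGraph (core k) ≃g G) := by
  obtain ⟨D, ⟨φ⟩⟩ := exists_iso_tripodGraph hV hG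
  have htough : (tripodGraph D).Tough := tough_of_iso φ.symm hG.2.1
  have heven : ∀ v, Even ((tripodGraph D).neighborSet v).ncard := fun v ↦ by
    rw [← Nat.card_coe_set_eq, Nat.card_congr (φ.mapNeighborSet v)]
    exact hG.2.2.1.2 _
  obtain ⟨k, σ, hσ, hk⟩ := exists_perm_comap_eq_core
    (even_ncard_neighborSet_tripodGraph_iff.mp heven)
    (by rintro rfl; exact not_tough_tripodGraph_bot htough)
  have hσ₀ (a : Fin 4) : σ a = 0 ↔ a = 0 := by rw [← hσ, σ.apply_eq_iff_eq, hσ]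
  refine ⟨k, ⟨.trans ⟨Equiv.sumCongr σ σ, ?_⟩ φ⟩⟩
  rintro (a | b) (a' | b') <;> simp [tripodGraph, ← hk, hσ₀]

/-! ### The three Harris graphs on 8 vertices -/

theorem isHarris_of_iso {W : Type*} {H : SimpleGraph W} (φ : G ≃g H) (hG : G.IsHarris) :
    H.IsHarris := by
  obtain ⟨hfin, htough, ⟨hconn, heven⟩, hham⟩ := hG
  refine ⟨.of_equiv V φ.toEquiv, tough_of_iso φ htough, ⟨φ.connected_iff.mp hconn, fun v ↦ ?_⟩, ?_⟩
  · rw [← Nat.card_congr (φ.symm.mapNeighborSet v).symm]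
    exact heven _
  · rintro ⟨a, p, hp, hsupp⟩
    refine hham ⟨_, p.map φ.symm.toHom, hp.map φ.symm.injective, fun v ↦ ?_⟩
    rw [Walk.support_map]
    exact List.mem_map.mpr ⟨φ v, hsupp _, φ.symm_apply_apply v⟩

theorem connected_tripodGraph (D : SimpleGraph (Fin 4)) : (tripodGraph D).Connected := by
  have hcenter (b : Fin 4) : (tripodGraph D).Adj (.inl 0) (.inr b) := .inl rfl
  have hhub (a : Fin 4) : (tripodGraph D).Adj (.inr 0) (.inl a) := .inr (.inl rfl)
  exact (connected_iff_exists_forall_reachable _).mpr ⟨.inl 0, fun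
    | .inl a => (hcenter 0).reachable.trans (hhub a).reachable
    | .inr b => (hcenter b).reachable⟩

theorem not_isHamiltonianGraph_tripodGraph (D : SimpleGraph (Fin 4)) :
    ¬(tripodGraph D).IsHamiltonianGraph := by
  refine not_isHamiltonianGraph_of_three_le_ncard_inter (c := .inl 0) ?_
  have hsub : .inr '' (({0}ᶜ : Finset (Fin 4)) : Set (Fin 4)) ⊆
      (tripodGraph D).neighborSet (.inl 0) ∩ {x | ((tripodGraph D).neighborSet x).ncard = 2} := by
    rintro _ ⟨b, hb, rfl⟩
    exact ⟨.inl rfl, by simp_all [ncard_neighborSet_tripodGraph_inr]⟩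
  refine le_of_eq_of_le ?_ (Set.ncard_le_ncard hsub)
  rw [Set.ncard_image_of_injective _ Sum.inr_injective, Set.ncard_coe_finset]
  rfl

theorem card_connectedComponent_le_ncard {α : Type*} [LinearOrder α] [Finite V] (r : V → α) :
    Nat.card G.ConnectedComponent ≤
      {v | ∀ u, r u < r v → ¬G.Adj u v ∧ ∀ w, ¬(G.Adj u w ∧ G.Adj w v)}.ncard := by
  -- The least vertex of a component has no smaller vertex within distance two.
  have hleast (c : G.ConnectedComponent) : ∃ v ∈ c, ∀ u ∈ c, r v ≤ r u :=
    Set.exists_min_image c.supp r (Set.toFinite _) c.nonempty_supp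
  choose f hf hmin using hleast
  have hinj : f.Injective := fun c d hcd ↦ (hf c).symm.trans (hcd ▸ hf d)
  rw [← Set.ncard_univ, ← Set.ncard_image_of_injective _ hinj]
  refine Set.ncard_le_ncard (Set.image_subset_iff.mpr fun c _ u hu ↦ ?_)
  have hnot : ¬G.Reachable u (f c) := fun h ↦
    hu.not_ge (hmin c u ((ConnectedComponent.sound h).trans (hf c)))
  exact ⟨fun h ↦ hnot h.reachable, fun w h ↦ hnot (h.1.reachable.trans h.2.reachable)⟩

theorem tough_of_forall_card_filter_le {α : Type*} [LinearOrder α] [Fintype V] [DecidableEq V]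
    [DecidableRel G.Adj] (r : V → α)
    (h : ∀ S : Finset V, {v ∈ Sᶜ | ∀ u ∈ Sᶜ, r u < r v →
      ¬G.Adj u v ∧ ∀ w ∈ Sᶜ, ¬(G.Adj u w ∧ G.Adj w v)}.card ≤ max S.card 1) : G.Tough := by
  intro S hS
  have hle := card_connectedComponent_le_ncard (G := G.induce (S : Set V)ᶜ) fun v ↦ r v
  rw [← Set.ncard_image_of_injective _ Subtype.val_injective] at hle
  have hmax : Nat.card (G.induce (S : Set V)ᶜ).ConnectedComponent ≤ max S.card 1 := by
    refine (hle.trans (Set.ncard_le_ncard ?_)).trans ((Set.ncard_coe_finset _).trans_le (h S))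
    rintro _ ⟨v, hv, rfl⟩
    have hvS : v.1 ∉ S := v.2
    simpa [hvS] using hv
  have hne : Nat.card (G.induce (S : Set V)ᶜ).ConnectedComponent ≠ 1 := fun hone ↦ by
    obtain ⟨hsub, ⟨c⟩⟩ := Nat.card_eq_one_iff_unique.mp hone
    exact hS { preconnected u v := ConnectedComponent.exact (Subsingleton.elim _ _)
               nonempty := ⟨c.out⟩ }
  omega

theorem tough_tripodGraph_core (k : Fin 3) : (tripodGraph (core k)).Tough := by
  refine tough_of_forall_card_filter_le finSumFinEquiv ?_
  decide +kernel +revert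

theorem isHarris_tripodGraph_core (k : Fin 3) : (tripodGraph (core k)).IsHarris := by
  refine ⟨inferInstance, tough_tripodGraph_core k, ⟨connected_tripodGraph _, ?_⟩,
    not_isHamiltonianGraph_tripodGraph _⟩
  simpa only [Nat.card_coe_set_eq] using
    even_ncard_neighborSet_tripodGraph_iff.mpr (even_ncard_neighborSet_core k)

theorem eq_of_tripodGraph_core_iso {i j : Fin 3}
    (φ : tripodGraph (core i) ≃g tripodGraph (core j)) : i = j := by
  have hsum : ∑ v, (tripodGraph (core i)).degree v ^ 2 = ∑ v, (tripodGraph (core j)).degree v ^ 2 :=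
    Fintype.sum_equiv φ.toEquiv _ _ fun v ↦ by simp
  have hinj : Function.Injective fun k ↦ ∑ v, (tripodGraph (core k)).degree v ^ 2 := by
    decide +kernel
  exact hinj hsum

/-- The Harris graph with core `core k`, its vertices `c, p₁, p₂, p₃, w, x₁, x₂, x₃` being numbered
in this order. -/
def harrisGraph (k : Fin 3) : SimpleGraph (Fin 8) :=
  (tripodGraph (core k)).map finSumFinEquiv.toEmbedding

def harrisGraphIso (k : Fin 3) : tripodGraph (core k) ≃g harrisGraph k :=
  Iso.map finSumFinEquiv _

end HarrisGraph

open HarrisGraph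

/-- Up to isomorphism, there are exactly 3 Harris graphs on 8 vertices. -/
theorem three_isHarris_on_eight :
    ∃ G : Fin 3 → SimpleGraph (Fin 8),
      (∀ i, (G i).IsHarris) ∧
      (∀ i j, i ≠ j → IsEmpty (G i ≃g G j)) ∧
      ∀ (V : Type u) (G' : SimpleGraph V), Nat.card V = 8 → G'.IsHarris →
        ∃ i, Nonempty (G i ≃g G') := by
  refine ⟨harrisGraph, fun k ↦ ?_, fun i j hij ↦ ⟨fun φ ↦ hij ?_⟩, fun V G hV hG ↦ ?_⟩
  · exact isHarris_of_iso (harrisGraphIso k) (isHarris_tripodGraph_core k)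
  · exact eq_of_tripodGraph_core_iso
      ((harrisGraphIso i).trans (φ.trans (harrisGraphIso j).symm))
  · obtain ⟨k, ⟨φ⟩⟩ := exists_iso_tripodGraph_core hV hG
    exact ⟨k, ⟨(harrisGraphIso k).symm.trans φ⟩⟩
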